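/- Let S be a type, X and Y nonempty types, T : S → X → Y → S, and Bad ⊆ S. Define the monotone operator F on subsets of S by F(W) = {s ∈ S | s ∉ Bad and for every x ∈ X there exists y ∈ Y with T(s,x,y) ∈ W}, and let Safe denote the greatest fixed point of F. Then for every s ∈ S: s ∈ Safe if and only if there exists a system strategy f mapping nonempty finite sequences of elements of X to elements of Y such that for every infinite sequence x₁, x₂, … of elements of X, the induced play s^1 = s, s^{n+1} = T(s^n, x_n, f(x₁,…,x_n)) never visits a state in Bad (i.e., s^n ∉ Bad for every n ≥ 1). -/

import Mathlib

/-- The play induced from initial state `s` by a history-dependent system strategy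
`f` (mapping nonempty finite sequences of environment actions to system actions) and
an infinite sequence `x` of environment actions. -/
def stratPlay {S X Y : Type*} (T : S → X → Y → S) (s : S)
    (f : {l : List X // l ≠ []} → Y) (x : ℕ → X) : ℕ → S
  | 0 => s
  | n + 1 =>
      T (stratPlay T s f x n) (x n)
        (f ⟨List.ofFn fun i : Fin (n + 1) => x i, by simp⟩)

/-!
The set of states from which the system wins is itself the greatest fixed point. It is a
post-fixed point: after the first round the rest of a winning strategy is winning again.
It contains every post-fixed point `W`: choosing answers that stay in `W` turns `W` into a game
graph without bad states, and a strategy recovers its current position in `W` from the history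
of environment actions, because its own answers are determined by that history.
-/

/-- A history-dependent strategy of the system: its answer to each nonempty sequence of
environment actions, listed from the oldest to the most recent. -/
abbrev SystemStrategy (X Y : Type*) : Type _ :=
  {l : List X // l ≠ []} → Y

section

variable {S X Y R : Type*}

/-- The strategy that remains of `f` once the environment has played the first action `a`. -/
def SystemStrategy.after (f : SystemStrategy X Y) (a : X) : SystemStrategy X Y :=
  fun l => f ⟨a :: l.1, List.cons_ne_nil a l.1⟩

/-- The strategy of a Mealy machine with memory `R`, started at `r`: it updates its memory by
`step`, and answers by `out`, which sees the memory before the update and the latest environment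
action. -/
def SystemStrategy.ofMealy (step : R → X → R) (out : R → X → Y) (r : R) : SystemStrategy X Y :=
  fun l => out (l.1.dropLast.foldl step r) (l.1.getLast l.2)

/-- The set of states from which some system strategy keeps every play out of `Bad`. -/
def winningRegion (T : S → X → Y → S) (Bad : Set S) : Set S :=
  {s | ∃ f : SystemStrategy X Y, ∀ (x : ℕ → X) (n : ℕ), stratPlay T s f x n ∉ Bad}

/-- The operator `F` of the safety game, bundled with its monotonicity: the safe states from
which the system can force the next state into a given set. -/
def safetyOperator (T : S → X → Y → S) (Bad : Set S) : Set S →o Set S where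
  toFun W := {s | s ∉ Bad ∧ ∀ x, ∃ y, T s x y ∈ W}
  monotone' _ _ hVW _ hs := ⟨hs.1, fun x => (hs.2 x).imp fun _ hy => hVW hy⟩

theorem stratPlay_succ_eq_stratPlay_after (T : S → X → Y → S) (s : S) (f : SystemStrategy X Y)
    (x : ℕ → X) (n : ℕ) :
    stratPlay T s f x (n + 1) =
      stratPlay T (T s (x 0) (f ⟨[x 0], List.cons_ne_nil _ _⟩)) (f.after (x 0))
        (fun i => x (i + 1)) n := by
  induction n with
  | zero => simp [stratPlay]
  | succ n ih =>
    rw [stratPlay, ih, stratPlay]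
    simp [SystemStrategy.after, List.ofFn_succ]

theorem stratPlay_ofMealy {T : S → X → Y → S} {step : R → X → R} {out : R → X → Y}
    {state : R → S} (hstep : ∀ r x, state (step r x) = T (state r) x (out r x))
    (r : R) (x : ℕ → X) (n : ℕ) :
    stratPlay T (state r) (SystemStrategy.ofMealy step out r) x n =
      state ((List.ofFn fun i : Fin n => x i).foldl step r) := by
  induction n with
  | zero => simp [stratPlay]
  | succ n ih =>
    rw [stratPlay, ih]
    simp [SystemStrategy.ofMealy, -List.ofFn_succ, List.ofFn_succ_last, hstep]

theorem winningRegion_le_safetyOperator [Nonempty X] (T : S → X → Y → S) (Bad : Set S) :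
    winningRegion T Bad ≤ safetyOperator T Bad (winningRegion T Bad) := by
  rintro s ⟨f, hf⟩
  refine ⟨hf (fun _ => Classical.arbitrary X) 0, fun a => ?_⟩
  refine ⟨f ⟨[a], List.cons_ne_nil _ _⟩, f.after a, fun x n => ?_⟩
  have avoids_bad := hf (fun i => Nat.casesOn i a x) (n + 1)
  rwa [stratPlay_succ_eq_stratPlay_after] at avoids_bad

theorem le_winningRegion_of_le_safetyOperator {T : S → X → Y → S} {Bad W : Set S}
    (hW : W ≤ safetyOperator T Bad W) : W ≤ winningRegion T Bad := by
  intro s hs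
  choose out hout using fun t : W => (hW t.2).2
  let step (t : W) (x : X) : W := ⟨T t x (out t x), hout t x⟩
  refine ⟨SystemStrategy.ofMealy step out ⟨s, hs⟩, fun x n => ?_⟩
  have play_eq := stratPlay_ofMealy (T := T) (step := step) (out := out) (state := Subtype.val)
    (fun _ _ => rfl) ⟨s, hs⟩ x n
  have play_mem : stratPlay T s (SystemStrategy.ofMealy step out ⟨s, hs⟩) x n ∈ W :=
    play_eq ▸ Subtype.prop _
  exact (hW play_mem).1

theorem gfp_safetyOperator [Nonempty X] (T : S → X → Y → S) (Bad : Set S) :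
    (safetyOperator T Bad).gfp = winningRegion T Bad :=
  le_antisymm
    (le_winningRegion_of_le_safetyOperator (safetyOperator T Bad).map_gfp.ge)
    ((safetyOperator T Bad).le_gfp (winningRegion_le_safetyOperator T Bad))

end

/-- The greatest fixed point of the safety operator
`F(W) = {s ∉ Bad | ∀ x, ∃ y, T s x y ∈ W}` consists exactly of the states from which
the system has a winning (history-dependent) strategy that avoids `Bad` forever. -/
theorem mem_greatest_fixed_point_iff_winning_strategy {S X Y : Type*}
    [Nonempty X] [Nonempty Y]
    (T : S → X → Y → S) (Bad : Set S)
    (F : Set S → Set S)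
    (hF : ∀ W : Set S, F W = {s : S | s ∉ Bad ∧ ∀ x : X, ∃ y : Y, T s x y ∈ W})
    (Safe : Set S)
    (hfix : F Safe = Safe)
    (hgreatest : ∀ W : Set S, F W = W → W ⊆ Safe)
    (s : S) :
    s ∈ Safe ↔
      ∃ f : {l : List X // l ≠ []} → Y, ∀ x : ℕ → X, ∀ n : ℕ,
        stratPlay T s f x n ∉ Bad := by
  obtain rfl : F = safetyOperator T Bad := funext hF
  have safe_eq_gfp : Safe = (safetyOperator T Bad).gfp :=
    have safe_isGreatest : IsGreatest (Function.fixedPoints (safetyOperator T Bad)) Safe :=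
      ⟨hfix, hgreatest⟩
    safe_isGreatest.unique (safetyOperator T Bad).isGreatest_gfp
  rw [safe_eq_gfp, gfp_safetyOperator]
  rfl
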